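/- (Fermionic source coding, direct part.) Let ρ be a density matrix on ℂ^(2^L) commuting with the parity operator P_L, with von Neumann entropy S(ρ) = −Tr(ρ log₂ ρ). For every R > S(ρ) and δ > 0 there exists N₀ ∈ ℕ such that for every N ≥ N₀ there exist M ∈ ℕ with M ≤ N·R, a finite family {E_i} of 2^M × 2^(NL) matrices with Σ_i E_iᴴE_i = I and each parity-homogeneous (P_M E_i = E_i P_L^{⊗N} or P_M E_i = −E_i P_L^{⊗N}), and a finite family {D_j} of 2^(NL) × 2^M matrices with Σ_j D_jᴴD_j = I and each parity-homogeneous (P_L^{⊗N} D_j = D_j P_M or P_L^{⊗N} D_j = −D_j P_M), such that the entanglement fidelity of the composite channel satisfies Σ_{i,j} |Tr(ρ^{⊗N} D_j E_i)|² ≥ 1 − δ. -/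

import Mathlib

open Matrix
open scoped ComplexOrder

noncomputable section

/-- Bit strings of length `L`. -/
abbrev BitStr (L : ℕ) := Fin L → Fin 2

/-- The parity operator `P_L = Z^{⊗L}` on `ℂ^(2^L)`: the diagonal matrix with entries
`(−1)^(s₁+⋯+s_L)`. -/
def parityOp (L : ℕ) : Matrix (BitStr L) (BitStr L) ℂ :=
  Matrix.diagonal fun s => (-1 : ℂ) ^ (∑ i, (s i : ℕ))

/-- `N`-fold tensor (Kronecker) power of a matrix. -/
def tpow {d : Type*} (ρ : Matrix d d ℂ) (N : ℕ) : Matrix (Fin N → d) (Fin N → d) ℂ :=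
  Matrix.of fun a b => ∏ k, ρ (a k) (b k)

/-- The von Neumann entropy `S(ρ) = −Tr(ρ log₂ ρ) = −Σ_x p_x log₂ p_x`, computed from the
eigenvalues of a Hermitian matrix. -/
def vnEntropy {n : Type*} [Fintype n] [DecidableEq n] {ρ : Matrix n n ℂ}
    (hρ : ρ.IsHermitian) : ℝ :=
  -∑ i, hρ.eigenvalues i * Real.logb 2 (hρ.eigenvalues i)

/-! ### Tensor powers -/

lemma tpow_mul {d : Type*} [Fintype d] (A B : Matrix d d ℂ) (N : ℕ) :
    tpow (A * B) N = tpow A N * tpow B N := by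
  ext a b
  simp only [tpow, Matrix.of_apply, Matrix.mul_apply]
  rw [Fintype.prod_sum]
  simp only [Finset.prod_mul_distrib]

lemma tpow_conjTranspose {d : Type*} (A : Matrix d d ℂ) (N : ℕ) :
    tpow Aᴴ N = (tpow A N)ᴴ := by
  ext a b
  simp [tpow, Matrix.conjTranspose_apply]

lemma tpow_diagonal {d : Type*} [DecidableEq d] (v : d → ℂ) (N : ℕ) :
    tpow (Matrix.diagonal v) N = Matrix.diagonal (fun x : Fin N → d => ∏ k, v (x k)) := by
  ext a b
  simp only [tpow, Matrix.of_apply, Matrix.diagonal_apply]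
  by_cases h : a = b
  · subst h; simp
  · rw [if_neg h]
    obtain ⟨k, hk⟩ := Function.ne_iff.mp h
    exact Finset.prod_eq_zero (Finset.mem_univ k) (if_neg hk)

lemma tpow_one {d : Type*} [DecidableEq d] (N : ℕ) :
    tpow (1 : Matrix d d ℂ) N = 1 := by
  rw [← Matrix.diagonal_one, tpow_diagonal]; simp

/-! ### Simultaneous diagonalization -/

lemma exists_sign_eig {n : Type*} [Fintype n] [DecidableEq n] (ρ P : Matrix n n ℂ)
    (hP2 : P * P = 1) (hc : ρ * P = P * ρ) :
    ∃ c : ℝ, ∀ (v : n → ℂ) (l : ℝ), (ρ + (c : ℂ) • P) *ᵥ v = (l : ℂ) • v →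
      ∃ s : ℝ, (s = 1 ∨ s = -1) ∧ P *ᵥ v = (s : ℂ) • v := by
  have hfin := Module.End.finite_hasEigenvalue (Matrix.toLin' ρ)
  obtain ⟨B, hB⟩ := hfin.isBounded.exists_norm_le
  have key : ∀ (w : n → ℂ) (m : ℂ), w ≠ 0 → ρ *ᵥ w = m • w → ‖m‖ ≤ B := by
    intro w m hw h
    apply hB
    refine Module.End.hasEigenvalue_of_hasEigenvector (x := w) ?_
    rw [Module.End.hasEigenvector_iff, Module.End.mem_eigenspace_iff]
    exact ⟨by simpa using h, hw⟩
  refine ⟨B + 1, fun v l hv => ?_⟩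
  have hv1 : ρ *ᵥ v = (l : ℂ) • v - ((B + 1 : ℝ) : ℂ) • (P *ᵥ v) := by
    rw [← hv, Matrix.add_mulVec, Matrix.smul_mulVec]; simp
  have hPP : P *ᵥ (P *ᵥ v) = v := by rw [Matrix.mulVec_mulVec, hP2, Matrix.one_mulVec]
  have hv2 : ρ *ᵥ (P *ᵥ v) = (l : ℂ) • (P *ᵥ v) - ((B + 1 : ℝ) : ℂ) • v := by
    rw [Matrix.mulVec_mulVec, hc, ← Matrix.mulVec_mulVec, hv1, Matrix.mulVec_sub,
      Matrix.mulVec_smul, Matrix.mulVec_smul, hPP]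
  by_cases hm : v - P *ᵥ v = 0
  · exact ⟨1, Or.inl rfl, by simpa using (sub_eq_zero.mp hm).symm⟩
  by_cases hp : v + P *ᵥ v = 0
  · exact ⟨-1, Or.inr rfl, by simpa using (eq_neg_of_add_eq_zero_right hp)⟩
  exfalso
  have h1 := key (v + P *ᵥ v) ((l - (B + 1) : ℝ) : ℂ) hp (by
    rw [Matrix.mulVec_add, hv1, hv2]; push_cast; module)
  have h2 := key (v - P *ᵥ v) ((l + (B + 1) : ℝ) : ℂ) hm (by
    rw [Matrix.mulVec_sub, hv1, hv2]; push_cast; module)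
  rw [Complex.norm_real, Real.norm_eq_abs] at h1 h2
  have := abs_le.mp h1
  have := abs_le.mp h2
  linarith

lemma simul_diag {n : Type*} [Fintype n] [DecidableEq n] (ρ P : Matrix n n ℂ)
    (hρ : ρ.IsHermitian) (hP : P.IsHermitian)
    (hP2 : P * P = 1) (hc : ρ * P = P * ρ) :
    ∃ (U : Matrix n n ℂ) (p s : n → ℝ), Uᴴ * U = 1 ∧ U * Uᴴ = 1 ∧
      (∀ i, s i = 1 ∨ s i = -1) ∧
      ρ * U = U * Matrix.diagonal (fun i => (p i : ℂ)) ∧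
      P * U = U * Matrix.diagonal (fun i => (s i : ℂ)) := by
  obtain ⟨c, h⟩ := exists_sign_eig ρ P hP2 hc
  have hA : (ρ + (c : ℂ) • P).IsHermitian := by
    unfold Matrix.IsHermitian
    rw [Matrix.conjTranspose_add, Matrix.conjTranspose_smul, hρ.eq, hP.eq]
    simp
  have hcol : ∀ j, (ρ + (c : ℂ) • P) *ᵥ ⇑(hA.eigenvectorBasis j) =
      (hA.eigenvalues j : ℂ) • ⇑(hA.eigenvectorBasis j) := fun j => by
    rw [hA.mulVec_eigenvectorBasis j]; ext; simp
  choose s hs hsP using fun j => h _ _ (hcol j)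
  refine ⟨hA.eigenvectorUnitary, fun j => hA.eigenvalues j - c * s j, s,
    Unitary.coe_star_mul_self hA.eigenvectorUnitary,
    Unitary.coe_mul_star_self hA.eigenvectorUnitary, hs, ?_, ?_⟩
  · ext i j
    rw [Matrix.mul_diagonal]
    have h1 := hcol j
    rw [Matrix.add_mulVec, Matrix.smul_mulVec, hsP j] at h1
    have h2 := congrFun h1 i
    simp only [Pi.add_apply, Pi.smul_apply, smul_eq_mul] at h2
    change (ρ *ᵥ ⇑(hA.eigenvectorBasis j)) i = (hA.eigenvectorBasis j) i * _
    push_cast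
    linear_combination h2
  · ext i j
    rw [Matrix.mul_diagonal]
    have h2 := congrFun (hsP j) i
    simp only [Pi.smul_apply, smul_eq_mul] at h2
    change (P *ᵥ ⇑(hA.eigenvectorBasis j)) i = (hA.eigenvectorBasis j) i * _
    linear_combination h2

lemma sum_eigenvalues_eq {n : Type*} [Fintype n] [DecidableEq n] (ρ U : Matrix n n ℂ)
    (hρ : ρ.IsHermitian) (p : n → ℝ) (hU : Uᴴ * U = 1)
    (h : ρ = U * Matrix.diagonal (fun i => (p i : ℂ)) * Uᴴ) (f : ℝ → ℝ) :
    ∑ i, f (hρ.eigenvalues i) = ∑ i, f (p i) := by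
  have h1 : ρ.charpoly = ∏ i, (Polynomial.X - Polynomial.C ((p i : ℂ))) := by
    rw [h, Matrix.charpoly_mul_comm, ← mul_assoc, hU, one_mul, Matrix.charpoly_diagonal]
  have h2 := hρ.roots_charpoly_eq_eigenvalues
  rw [h1, Polynomial.roots_prod _ _ (by
    rw [Finset.prod_ne_zero_iff]; intro i _; exact Polynomial.X_sub_C_ne_zero _)] at h2
  simp only [Polynomial.roots_X_sub_C, Multiset.bind_singleton] at h2
  have h3 := congrArg (fun m : Multiset ℂ => (m.map (fun z => f z.re)).sum) h2
  simp only [Multiset.map_map, Function.comp_def] at h3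
  simpa using h3.symm

/-! ### Typical sets -/

lemma exists_chernoff {n : Type*} [Fintype n] (p : n → ℝ) (h1 : ∑ i, p i = 1) (c : ℝ)
    (hc : -∑ i, p i * Real.log (p i) < c) :
    ∃ t : ℝ, 0 < t ∧ ∑ i, p i * Real.exp (t * (-Real.log (p i) - c)) < 1 := by
  let f : ℝ → ℝ := fun t => ∑ i, p i * Real.exp (t * (-Real.log (p i) - c))
  have hd : HasDerivAt f (∑ i, p i * (-Real.log (p i) - c)) 0 := by
    refine HasDerivAt.fun_sum fun i _ => ?_
    have := (((hasDerivAt_id (0 : ℝ)).mul_const (-Real.log (p i) - c)).exp).const_mul (p i)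
    simpa using this
  have hneg : ∑ i, p i * (-Real.log (p i) - c) < 0 := by
    have : ∑ i, p i * (-Real.log (p i) - c) = -∑ i, p i * Real.log (p i) - c := by
      simp only [mul_sub, Finset.sum_sub_distrib, ← Finset.sum_mul, h1, mul_neg,
        Finset.sum_neg_distrib, one_mul]
    rw [this]; linarith
  have hf0 : f 0 = 1 := by simp [f, h1]
  have hs := hasDerivAt_iff_tendsto_slope.mp hd
  have hev : ∀ᶠ t in nhdsWithin (0 : ℝ) (Set.Ioi 0), slope f 0 t < 0 :=
    (hs.mono_left (nhdsWithin_mono _ (fun x hx => ne_of_gt hx))).eventually_lt_const hneg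
  obtain ⟨t, ht, ht0⟩ := (hev.and self_mem_nhdsWithin).exists
  have ht0 : 0 < t := ht0
  refine ⟨t, ht0, ?_⟩
  rw [slope_def_field, hf0, sub_zero] at ht
  have := (div_neg_iff.mp ht)
  change f t < 1
  rcases this with h | h <;> linarith

lemma exists_typical {n : Type*} [Fintype n] (p : n → ℝ) (hp : ∀ i, 0 ≤ p i)
    (h1 : ∑ i, p i = 1) (c : ℝ)
    (hc : -∑ i, p i * Real.log (p i) < c) (η : ℝ) (hη : 0 < η) :
    ∃ N₀ : ℕ, ∀ N ≥ N₀, ∃ T : Finset (Fin N → n),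
      (T.card : ℝ) ≤ Real.exp (N * c) ∧ 1 - η ≤ ∑ x ∈ T, ∏ k, p (x k) := by
  classical
  obtain ⟨t, ht0, ht⟩ := exists_chernoff p h1 c hc
  set q := ∑ i, p i * Real.exp (t * (-Real.log (p i) - c)) with hq
  have hq0 : 0 ≤ q := Finset.sum_nonneg fun i _ => mul_nonneg (hp i) (Real.exp_pos _).le
  have hlim := (tendsto_pow_atTop_nhds_zero_of_lt_one hq0 ht).eventually_lt_const hη
  obtain ⟨N₀, hN₀⟩ := Filter.eventually_atTop.mp hlim
  refine ⟨N₀, fun N hN => ?_⟩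
  have hsum : ∑ x : Fin N → n, ∏ k, p (x k) = 1 := by
    rw [← Fintype.prod_sum (fun _ : Fin N => p)]; simp [h1]
  have hnn : ∀ x : Fin N → n, 0 ≤ ∏ k, p (x k) := fun x => Finset.prod_nonneg fun k _ => hp _
  obtain ⟨T, hT⟩ : ∃ T : Finset (Fin N → n), ∀ x, x ∈ T ↔ Real.exp (-(N * c)) ≤ ∏ k, p (x k) :=
    ⟨Finset.univ.filter fun x => Real.exp (-(N * c)) ≤ ∏ k, p (x k), by simp⟩
  refine ⟨T, ?_, ?_⟩
  · have h2 : (T.card : ℝ) * Real.exp (-(N * c)) ≤ 1 := by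
      calc (T.card : ℝ) * Real.exp (-(N * c)) = ∑ x ∈ T, Real.exp (-(N * c)) := by simp
        _ ≤ ∑ x ∈ T, ∏ k, p (x k) := Finset.sum_le_sum fun x hx => (hT x).mp hx
        _ ≤ ∑ x : Fin N → n, ∏ k, p (x k) :=
          Finset.sum_le_univ_sum_of_nonneg hnn
        _ = 1 := hsum
    rw [Real.exp_neg, ← div_eq_mul_inv, div_le_one (Real.exp_pos _)] at h2
    exact h2
  · have h3 : ∑ x ∈ Tᶜ, ∏ k, p (x k) ≤ q ^ N := by
      have hqN : q ^ N = ∑ x : Fin N → n, ∏ k, (p (x k) * Real.exp (t * (-Real.log (p (x k)) - c))) := by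
        rw [← Fintype.prod_sum (fun _ : Fin N => fun i => p i * Real.exp (t * (-Real.log (p i) - c)))]
        simp [hq]
      rw [hqN]
      have hterm : ∀ x : Fin N → n,
          0 ≤ ∏ k, (p (x k) * Real.exp (t * (-Real.log (p (x k)) - c))) :=
        fun x => Finset.prod_nonneg fun k _ => mul_nonneg (hp _) (Real.exp_pos _).le
      refine (Finset.sum_le_sum fun x hx => ?_).trans
        (Finset.sum_le_univ_sum_of_nonneg hterm)
      by_cases hz : ∏ k, p (x k) = 0
      · rw [hz]; exact hterm x
      have hz' : ∀ k, p (x k) ≠ 0 := fun k => Finset.prod_ne_zero_iff.mp hz k (Finset.mem_univ k)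
      rw [Finset.prod_mul_distrib, ← Real.exp_sum]
      refine le_mul_of_one_le_right (hnn x) (Real.one_le_exp ?_)
      rw [← Finset.mul_sum, Finset.sum_sub_distrib, Finset.sum_neg_distrib,
        ← Real.log_prod (fun k _ => hz' k)]
      refine mul_nonneg ht0.le ?_
      have hx' : ∏ k, p (x k) < Real.exp (-(N * c)) := by
        rw [Finset.mem_compl, hT, not_le] at hx
        exact hx
      have := (Real.log_lt_iff_lt_exp (lt_of_le_of_ne (hnn x) (Ne.symm hz))).mpr hx'
      simp only [Finset.sum_const, Finset.card_univ, Fintype.card_fin, nsmul_eq_mul]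
      linarith
    have h4 := Finset.sum_add_sum_compl T (fun x => ∏ k, p (x k))
    rw [hsum] at h4
    have := hN₀ N hN
    linarith

/-! ### Completing a partial isometry to a channel -/

lemma complete_channel {X Y : Type*} [Fintype X] [DecidableEq X] [Fintype Y] [DecidableEq Y]
    (V : Matrix Y X ℂ) (T : Finset X)
    (hV : Vᴴ * V = Matrix.diagonal fun x => if x ∈ T then 1 else 0) (y₀ : Y)
    (sX : X → ℝ) (sY : Y → ℝ) (hX : ∀ x, sX x = 1 ∨ sX x = -1) (hY : ∀ y, sY y = 1 ∨ sY y = -1)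
    (hVs : Matrix.diagonal (fun y => (sY y : ℂ)) * V =
      V * Matrix.diagonal (fun x => (sX x : ℂ))) :
    ∃ (m : ℕ) (K : Fin (m + 1) → Matrix Y X ℂ), K 0 = V ∧ ∑ i, (K i)ᴴ * K i = 1 ∧
      ∀ i, Matrix.diagonal (fun y => (sY y : ℂ)) * K i =
          K i * Matrix.diagonal (fun x => (sX x : ℂ)) ∨
        Matrix.diagonal (fun y => (sY y : ℂ)) * K i =
          -(K i * Matrix.diagonal (fun x => (sX x : ℂ))) := by
  let e := Fintype.equivFin X
  let J : X → Matrix Y X ℂ := fun x => Matrix.single y₀ x (if x ∈ T then 0 else 1)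
  refine ⟨Fintype.card X, Fin.cons V (fun i => J (e.symm i)), rfl, ?_, ?_⟩
  · rw [Fin.sum_univ_succ]
    simp only [Fin.cons_zero, Fin.cons_succ]
    rw [Equiv.sum_comp e.symm (fun x => (J x)ᴴ * J x), hV]
    have hJ : ∀ x, (J x)ᴴ * J x = Matrix.single x x (if x ∈ T then 0 else 1) := by
      intro x
      simp only [J, Matrix.conjTranspose_single]
      rw [Matrix.single_mul_single_same]
      split_ifs <;> simp
    simp only [hJ]
    rw [← Matrix.diagonal_one, ← Matrix.sum_single_eq_diagonal, ← Matrix.sum_single_eq_diagonal,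
      ← Finset.sum_add_distrib]
    refine Finset.sum_congr rfl fun x _ => ?_
    rw [← Matrix.single_add]
    split_ifs <;> simp
  · intro i
    refine Fin.cases ?_ (fun i => ?_) i
    · exact Or.inl hVs
    · simp only [Fin.cons_succ, J]
      have hs : sY y₀ = sX (e.symm i) ∨ sY y₀ = - sX (e.symm i) := by
        rcases hX (e.symm i) with h | h <;> rcases hY y₀ with h' | h' <;> simp [h, h']
      rcases hs with h | h
      · left
        ext y x
        rw [Matrix.diagonal_mul, Matrix.mul_diagonal, Matrix.single_apply]
        split_ifs with h1 h2
        · simp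
        · rw [← h1.1, ← h1.2, h]; ring
        · simp
      · right
        ext y x
        rw [Matrix.neg_apply, Matrix.diagonal_mul, Matrix.mul_diagonal, Matrix.single_apply]
        split_ifs with h1 h2
        · simp
        · rw [← h1.1, ← h1.2, h]; push_cast; ring
        · simp

/-- The real sign of a bit string. -/
def bitSign (M : ℕ) (s : BitStr M) : ℝ := (-1 : ℝ) ^ (∑ i, (s i : ℕ))

lemma bitSign_pm (M : ℕ) (s : BitStr M) : bitSign M s = 1 ∨ bitSign M s = -1 :=
  neg_one_pow_eq_or ℝ _

lemma parityOp_eq (M : ℕ) : parityOp M = Matrix.diagonal fun s => (bitSign M s : ℂ) := by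
  simp [parityOp, bitSign]

lemma exists_bit (M : ℕ) (s : BitStr M) (r : ℝ) (hr : r = 1 ∨ r = -1) :
    ∃ b : Fin 2, bitSign (M + 1) (Fin.cons b s) = r := by
  have key : ∀ b : Fin 2, bitSign (M + 1) (Fin.cons b s) = (-1) ^ (b : ℕ) * bitSign M s := by
    intro b
    simp [bitSign, Fin.sum_univ_succ, pow_add]
  rcases hr with rfl | rfl <;> rcases bitSign_pm M s with h | h
  · exact ⟨0, by rw [key, h]; simp⟩
  · exact ⟨1, by rw [key, h]; simp⟩
  · exact ⟨1, by rw [key, h]; simp⟩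
  · exact ⟨0, by rw [key, h]; simp⟩

lemma exists_code {X : Type*} (T : Finset X) (M : ℕ) (hT : T.card ≤ 2 ^ M)
    (s : X → ℝ) (hs : ∀ x, s x = 1 ∨ s x = -1) :
    ∃ g : X → BitStr (M + 1), Set.InjOn g T ∧ ∀ x, bitSign (M + 1) (g x) = s x := by
  classical
  have hcard : Fintype.card T ≤ Fintype.card (BitStr M) := by simpa using hT
  obtain ⟨f⟩ := Function.Embedding.nonempty_of_card_le hcard
  let f' : X → BitStr M := fun x => if h : x ∈ T then f ⟨x, h⟩ else 0
  choose b hb using fun x => exists_bit M (f' x) (s x) (hs x)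
  refine ⟨fun x => Fin.cons (b x) (f' x), ?_, hb⟩
  intro x hx y hy hxy
  have h2 : f' x = f' y := (Fin.cons_inj.mp hxy).2
  have hx' : x ∈ T := hx
  have hy' : y ∈ T := hy
  simp only [f', dif_pos hx', dif_pos hy'] at h2
  simpa using f.injective h2

/-- Encoding/decoding in the eigenbasis. -/
lemma exists_coding {X : Type*} [Fintype X] [DecidableEq X] (x₀ : X) (T : Finset X) (M : ℕ)
    (hT : T.card ≤ 2 ^ M) (s : X → ℝ) (hs : ∀ x, s x = 1 ∨ s x = -1) :
    ∃ (nE : ℕ) (E : Fin (nE + 1) → Matrix (BitStr (M + 1)) X ℂ)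
      (nD : ℕ) (D : Fin (nD + 1) → Matrix X (BitStr (M + 1)) ℂ),
      (∑ i, (E i)ᴴ * E i = 1) ∧
      (∀ i, parityOp (M + 1) * E i = E i * Matrix.diagonal (fun x => (s x : ℂ)) ∨
        parityOp (M + 1) * E i = -(E i * Matrix.diagonal (fun x => (s x : ℂ)))) ∧
      (∑ j, (D j)ᴴ * D j = 1) ∧
      (∀ j, Matrix.diagonal (fun x => (s x : ℂ)) * D j = D j * parityOp (M + 1) ∨
        Matrix.diagonal (fun x => (s x : ℂ)) * D j = -(D j * parityOp (M + 1))) ∧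
      D 0 * E 0 = Matrix.diagonal fun x => if x ∈ T then 1 else 0 := by
  obtain ⟨g, hg, hgs⟩ := exists_code T M hT s hs
  let V : Matrix (BitStr (M + 1)) X ℂ := Matrix.of fun y x => if x ∈ T ∧ g x = y then 1 else 0
  have hVs : Matrix.diagonal (fun y => (bitSign (M + 1) y : ℂ)) * V =
      V * Matrix.diagonal (fun x => (s x : ℂ)) := by
    ext y x
    rw [Matrix.diagonal_mul, Matrix.mul_diagonal]
    simp only [V, Matrix.of_apply]
    split_ifs with h
    · rw [← h.2, hgs]; ring
    · simp
  have hVs' : Matrix.diagonal (fun x => (s x : ℂ)) * Vᴴ =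
      Vᴴ * Matrix.diagonal (fun y => (bitSign (M + 1) y : ℂ)) := by
    have := congrArg Matrix.conjTranspose hVs
    simp only [Matrix.conjTranspose_mul, Matrix.diagonal_conjTranspose] at this
    have hr : ∀ {ι : Type _} (f : ι → ℝ), star (fun i => (f i : ℂ)) = fun i => (f i : ℂ) := by
      intro ι f; ext i; simp
    have hr' : star (fun x => (s x : ℂ)) = fun x => (s x : ℂ) := by ext i; simp
    rw [hr, hr'] at this
    exact this.symm
  have hV : Vᴴ * V = Matrix.diagonal fun x => if x ∈ T then 1 else 0 := by
    ext x x'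
    simp only [V, Matrix.mul_apply, Matrix.conjTranspose_apply, Matrix.of_apply,
      Matrix.diagonal_apply]
    rw [Finset.sum_eq_single (g x)]
    · by_cases hx : x ∈ T <;> by_cases hx' : x' ∈ T
      · have : g x' = g x ↔ x = x' := ⟨fun h => (hg hx' hx h).symm, fun h => by rw [h]⟩
        simp [hx, hx', this]
      · have : x ≠ x' := fun h => hx' (h ▸ hx)
        simp [hx', this]
      · simp [hx]
      · simp [hx]
    · intro y _ hy
      simp [Ne.symm hy]
    · simp
  have hV' : Vᴴᴴ * Vᴴ = Matrix.diagonal fun y => if y ∈ T.image g then 1 else 0 := by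
    rw [Matrix.conjTranspose_conjTranspose]
    ext y y'
    simp only [V, Matrix.mul_apply, Matrix.conjTranspose_apply, Matrix.of_apply,
      Matrix.diagonal_apply]
    by_cases hy : y ∈ T.image g
    · obtain ⟨x, hx, rfl⟩ := Finset.mem_image.mp hy
      rw [Finset.sum_eq_single x]
      · rw [if_pos hy]; simp [hx]
      · intro x' _ hx'
        have : ¬ (x' ∈ T ∧ g x' = g x) := fun h => hx' (hg h.1 hx h.2)
        simp [this]
      · simp
    · rw [if_neg hy, ite_self]
      refine Finset.sum_eq_zero fun x _ => ?_
      have : ¬ (x ∈ T ∧ g x = y) := fun h => hy (Finset.mem_image.mpr ⟨x, h.1, h.2⟩)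
      simp [this]
  obtain ⟨nE, E, hE0, hE1, hE2⟩ := complete_channel V T hV (g x₀) s _ hs (bitSign_pm _) hVs
  obtain ⟨nD, D, hD0, hD1, hD2⟩ := complete_channel Vᴴ (T.image g) hV' x₀ _ s (bitSign_pm _) hs hVs'
  rw [parityOp_eq]
  exact ⟨nE, E, nD, D, hE1, hE2, hD1, hD2, by rw [hD0, hE0, hV]⟩

/-- Fermionic source coding, direct part: for any rate `R > S(ρ)` there are parity-respecting
(i.e. admissible fermionic) encoding and decoding channels into `M ≤ N·R` modes whose
composition has entanglement fidelity at least `1 − δ` on `ρ^{⊗N}`, for all large `N`. -/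
theorem fermionic_source_coding_direct (L : ℕ)
    (ρ : Matrix (BitStr L) (BitStr L) ℂ) (hρ : ρ.PosSemidef) (htr : ρ.trace = 1)
    (hpar : ρ * parityOp L = parityOp L * ρ)
    (R : ℝ) (hR : vnEntropy hρ.1 < R) (δ : ℝ) (hδ : 0 < δ) :
    ∃ N₀ : ℕ, ∀ N ≥ N₀,
      ∃ M : ℕ, (M : ℝ) ≤ (N : ℝ) * R ∧
      ∃ (nE : ℕ) (E : Fin nE → Matrix (BitStr M) (Fin N → BitStr L) ℂ)
        (nD : ℕ) (D : Fin nD → Matrix (Fin N → BitStr L) (BitStr M) ℂ),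
        (∑ i, (E i)ᴴ * E i = 1) ∧
        (∀ i, parityOp M * E i = E i * tpow (parityOp L) N ∨
              parityOp M * E i = -(E i * tpow (parityOp L) N)) ∧
        (∑ j, (D j)ᴴ * D j = 1) ∧
        (∀ j, tpow (parityOp L) N * D j = D j * parityOp M ∨
              tpow (parityOp L) N * D j = -(D j * parityOp M)) ∧
        1 - δ ≤ ∑ i, ∑ j, ‖(tpow ρ N * (D j * E i)).trace‖ ^ 2 := by
  have hP : parityOp L = Matrix.diagonal fun s => (bitSign L s : ℂ) := parityOp_eq L
  have hPh : (parityOp L).IsHermitian := by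
    rw [hP]
    apply Matrix.isHermitian_diagonal_of_self_adjoint
    ext i; simp
  have hP2 : parityOp L * parityOp L = 1 := by
    rw [hP, Matrix.diagonal_mul_diagonal, ← Matrix.diagonal_one]
    congr 1
    ext s
    rcases bitSign_pm L s with h | h <;> simp [h]
  obtain ⟨U, p, s, hU1, hU2, hs, hUρ, hUP⟩ := simul_diag ρ (parityOp L) hρ.1 hPh hP2 hpar
  have hρU : ρ = U * Matrix.diagonal (fun i => (p i : ℂ)) * Uᴴ := by
    rw [← hUρ, mul_assoc, hU2, mul_one]
  have hd : Uᴴ * ρ * U = Matrix.diagonal (fun i => (p i : ℂ)) := by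
    rw [mul_assoc, hUρ, ← mul_assoc, hU1, one_mul]
  have hp : ∀ i, 0 ≤ p i := by
    have := hρ.conjTranspose_mul_mul_same U
    rw [hd, Matrix.posSemidef_diagonal_iff] at this
    intro i
    exact_mod_cast this i
  have hp1 : ∑ i, p i = 1 := by
    have h := htr
    rw [hρU, Matrix.trace_mul_comm, ← mul_assoc, hU1, one_mul, Matrix.trace_diagonal] at h
    exact_mod_cast h
  have hS : vnEntropy hρ.1 = -∑ i, p i * Real.logb 2 (p i) := by
    unfold vnEntropy
    rw [sum_eigenvalues_eq ρ U hρ.1 p hU1 hρU (fun x => x * Real.logb 2 x)]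
  set S := vnEntropy hρ.1 with hSdef
  have hlog2 : 0 < Real.log 2 := Real.log_pos (by norm_num)
  have hS' : -∑ i, p i * Real.log (p i) = S * Real.log 2 := by
    rw [hS, neg_mul, Finset.sum_mul]
    congr 1
    refine Finset.sum_congr rfl fun i _ => ?_
    unfold Real.logb
    field_simp
  have hS0 : 0 ≤ S := by
    rw [hS, ← Finset.sum_neg_distrib]
    refine Finset.sum_nonneg fun i _ => ?_
    have hle : p i ≤ 1 := by
      rw [← hp1]; exact Finset.single_le_sum (fun j _ => hp j) (Finset.mem_univ i)
    have : Real.logb 2 (p i) ≤ 0 := Real.logb_nonpos (by norm_num) (hp i) hle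
    nlinarith [hp i]
  obtain ⟨N₁, hN₁⟩ := exists_typical p hp hp1 ((S + R) / 2 * Real.log 2)
    (by rw [hS']; exact mul_lt_mul_of_pos_right (by linarith) hlog2) (δ / 2) (by linarith)
  obtain ⟨N₂, hN₂⟩ := exists_nat_ge (4 / (R - S))
  refine ⟨max N₁ N₂, fun N hN => ?_⟩
  obtain ⟨T, hTc, hTp⟩ := hN₁ N (le_trans (le_max_left _ _) hN)
  have hNR : 4 ≤ N * (R - S) := by
    rw [div_le_iff₀ (by linarith)] at hN₂
    have : (N₂ : ℝ) ≤ N := by exact_mod_cast le_trans (le_max_right _ _) hN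
    nlinarith
  have hNS : 0 ≤ (N : ℝ) * S := by positivity
  have hnn : 0 ≤ (N : ℝ) * R - 1 := by nlinarith
  set M := ⌊(N : ℝ) * R - 1⌋₊ with hM
  have hM1 : (M : ℝ) ≤ N * R - 1 := Nat.floor_le hnn
  have hM2 : (N : ℝ) * R - 1 < M + 1 := Nat.lt_floor_add_one _
  have hTM : T.card ≤ 2 ^ M := by
    have : (T.card : ℝ) ≤ 2 ^ M := by
      refine hTc.trans ?_
      rw [← Real.rpow_natCast, Real.rpow_def_of_pos (by norm_num)]
      apply Real.exp_le_exp.mpr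
      have : (N : ℝ) * ((S + R) / 2) ≤ M := by nlinarith
      nlinarith
    exact_mod_cast this
  let W := tpow U N
  have hW1 : Wᴴ * W = 1 := by
    simp only [W]; rw [← tpow_conjTranspose, ← tpow_mul, hU1, tpow_one]
  have hW2 : W * Wᴴ = 1 := by
    simp only [W]; rw [← tpow_conjTranspose, ← tpow_mul, hU2, tpow_one]
  let sX : (Fin N → BitStr L) → ℝ := fun x => ∏ k, s (x k)
  have hsX : ∀ x, sX x = 1 ∨ sX x = -1 := by
    intro x
    rw [← sq_eq_one_iff]
    simp only [sX]
    rw [← Finset.prod_pow]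
    exact Finset.prod_eq_one fun k _ => sq_eq_one_iff.mpr (hs _)
  have hPW : tpow (parityOp L) N * W = W * Matrix.diagonal (fun x => (sX x : ℂ)) := by
    simp only [W]
    rw [← tpow_mul, hUP, tpow_mul, tpow_diagonal]
    simp [sX]
  have hWP : Wᴴ * tpow (parityOp L) N = Matrix.diagonal (fun x => (sX x : ℂ)) * Wᴴ := by
    calc Wᴴ * tpow (parityOp L) N = Wᴴ * (tpow (parityOp L) N * W) * Wᴴ := by
          rw [mul_assoc, mul_assoc, hW2, mul_one]
      _ = _ := by rw [hPW, ← mul_assoc, hW1, one_mul]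
  have hρW : tpow ρ N = W * Matrix.diagonal (fun x => ((∏ k, p (x k) : ℝ) : ℂ)) * Wᴴ := by
    simp only [W]
    conv_lhs => rw [hρU, tpow_mul, tpow_mul, tpow_diagonal, tpow_conjTranspose]
    simp
  obtain ⟨nE, E, nD, D, hE1, hE2, hD1, hD2, hDE⟩ :=
    exists_coding (fun _ _ => 0 : Fin N → BitStr L) T M hTM sX hsX
  refine ⟨M + 1, by push_cast; linarith, nE + 1, fun i => E i * Wᴴ, nD + 1, fun j => W * D j,
    ?_, ?_, ?_, ?_, ?_⟩
  · have : ∀ i, (E i * Wᴴ)ᴴ * (E i * Wᴴ) = W * ((E i)ᴴ * E i) * Wᴴ := by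
      intro i
      simp only [Matrix.conjTranspose_mul, Matrix.conjTranspose_conjTranspose, Matrix.mul_assoc]
    simp only [this]
    rw [← Finset.sum_mul, ← Finset.mul_sum, hE1, mul_one, hW2]
  · intro i
    rw [Matrix.mul_assoc (E i), hWP, ← Matrix.mul_assoc, ← Matrix.mul_assoc, ← Matrix.neg_mul]
    rcases hE2 i with h | h
    · left; rw [h]
    · right; rw [h]
  · have : ∀ j, (W * D j)ᴴ * (W * D j) = (D j)ᴴ * D j := by
      intro j
      rw [Matrix.conjTranspose_mul, Matrix.mul_assoc, ← Matrix.mul_assoc Wᴴ, hW1, Matrix.one_mul]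
    simp only [this, hD1]
  · intro j
    rw [← Matrix.mul_assoc, hPW, Matrix.mul_assoc, Matrix.mul_assoc, ← Matrix.mul_neg]
    rcases hD2 j with h | h
    · left; rw [h]
    · right; rw [h]
  · have htrace : (tpow ρ N * (W * D 0 * (E 0 * Wᴴ))).trace =
        ((∑ x ∈ T, ∏ k, p (x k) : ℝ) : ℂ) := by
      have h1 : tpow ρ N * (W * D 0 * (E 0 * Wᴴ)) =
          W * (Matrix.diagonal (fun x => ((∏ k, p (x k) : ℝ) : ℂ)) * (D 0 * E 0) * Wᴴ) := by
        rw [hρW]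
        calc _ = W * Matrix.diagonal (fun x => ((∏ k, p (x k) : ℝ) : ℂ)) * (Wᴴ * W) *
              (D 0 * E 0) * Wᴴ := by simp only [Matrix.mul_assoc]
          _ = _ := by rw [hW1]; simp only [Matrix.mul_assoc, Matrix.one_mul]
      rw [h1, Matrix.trace_mul_comm, Matrix.mul_assoc, hW1, Matrix.mul_one, hDE,
        Matrix.diagonal_mul_diagonal, Matrix.trace_diagonal]
      simp [Finset.sum_ite_mem]
    have hT0 : 0 ≤ ∑ x ∈ T, ∏ k, p (x k) :=
      Finset.sum_nonneg fun x _ => Finset.prod_nonneg fun k _ => hp _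
    have h0 : 1 - δ ≤ ‖(tpow ρ N * (W * D 0 * (E 0 * Wᴴ))).trace‖ ^ 2 := by
      rw [htrace, Complex.norm_real, Real.norm_eq_abs, sq_abs]
      nlinarith [sq_nonneg (∑ x ∈ T, ∏ k, p (x k) - 1)]
    refine h0.trans ?_
    refine le_trans ?_ (Finset.single_le_sum (fun i _ => Finset.sum_nonneg fun j _ => sq_nonneg _)
      (Finset.mem_univ (0 : Fin (nE + 1))))
    exact Finset.single_le_sum (f := fun j => ‖(tpow ρ N * (W * D j * (E 0 * Wᴴ))).trace‖ ^ 2)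
      (fun j _ => sq_nonneg _) (Finset.mem_univ (0 : Fin (nD + 1)))
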